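/- For every distortion level D > 0, the minimal achievable rate of direct coding for machines equals that of model splitting: R_XY(D;T) = R_Y(D;T). -/

import Mathlib

open scoped BigOperators

/-- Joint distribution P(a,b) = p(a)·k(a)(b) induced by a source `p` and a channel `k`,
as a real number. -/
noncomputable def jointP {A B : Type*} [Fintype A] [Fintype B] (p : PMF A) (k : A → PMF B)
    (a : A) (b : B) : ℝ :=
  (p a * k a b).toReal

/-- Marginal distribution of the second coordinate of the joint induced by `(p, k)`. -/
noncomputable def margSnd {A B : Type*} [Fintype A] [Fintype B] (p : PMF A) (k : A → PMF B)
    (b : B) : ℝ :=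
  ∑ a, jointP p k a b

/-- Mutual information I(A;B) = ∑_{a,b} P(a,b)·log(P(a,b)/(P(a)·P(b))) of the joint
induced by `(p, k)`; the convention 0·log 0 = 0 holds automatically in Lean. -/
noncomputable def mutualInfo {A B : Type*} [Fintype A] [Fintype B] (p : PMF A)
    (k : A → PMF B) : ℝ :=
  ∑ a, ∑ b, jointP p k a b * Real.log (jointP p k a b / ((p a).toReal * margSnd p k b))

/-- Expected distortion E[d(A,B)] under the joint induced by `(p, k)`. -/
noncomputable def expDist {A B : Type*} [Fintype A] [Fintype B] (p : PMF A) (k : A → PMF B)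
    (d : A → B → ℝ) : ℝ :=
  ∑ a, ∑ b, jointP p k a b * d a b

/-- Rate-distortion function: infimum of mutual information over all channels `A → PMF B`
meeting the expected-distortion constraint `≤ D`. -/
noncomputable def rate {A B : Type*} [Fintype A] [Fintype B] (p : PMF A) (d : A → B → ℝ)
    (D : ℝ) : ℝ :=
  sInf { r : ℝ | ∃ k : A → PMF B, expDist p k d ≤ D ∧ r = mutualInfo p k }

/-- Conditional probability P(A = a | B = b) under the joint induced by `(p, k)`. -/
noncomputable def condProb {A B : Type*} [Fintype A] [Fintype B] (p : PMF A) (k : A → PMF B)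
    (a : A) (b : B) : ℝ :=
  jointP p k a b / margSnd p k b

open Classical in
/-- The pushforward of a finite distribution, as a sum of real numbers over the fiber. -/
lemma toReal_map_apply {A C : Type*} [Fintype A] (p : PMF A) (g : A → C) (c : C) :
    (p.map g c).toReal = ∑ a with g a = c, (p a).toReal := by
  rw [PMF.map_apply, tsum_fintype, Finset.sum_filter,
    ENNReal.toReal_sum (fun a _ => by split_ifs <;> simp [PMF.apply_ne_top])]
  refine Finset.sum_congr rfl fun a _ => ?_
  by_cases hc : g a = c
  · simp [hc]
  · simp [hc, Ne.symm hc]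

/-- Change of variables for expectations under a pushforward. -/
lemma sum_map_mul {A C : Type*} [Fintype A] [Fintype C] (p : PMF A) (g : A → C) (φ : C → ℝ) :
    ∑ c, (p.map g c).toReal * φ c = ∑ a, (p a).toReal * φ (g a) := by
  classical
  rw [← Finset.sum_fiberwise Finset.univ g]
  refine Finset.sum_congr rfl fun c _ => ?_
  rw [toReal_map_apply, Finset.sum_mul]
  exact Finset.sum_congr rfl fun a ha => by rw [(Finset.mem_filter.1 ha).2]

lemma margSnd_comp {A B C : Type*} [Fintype A] [Fintype B] [Fintype C] (p : PMF A) (g : A → C)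
    (k : C → PMF B) (b : B) : margSnd p (fun a => k (g a)) b = margSnd (p.map g) k b := by
  simp only [margSnd, jointP, ENNReal.toReal_mul]
  exact (sum_map_mul p g fun c => (k c b).toReal).symm

lemma expDist_comp {A B C : Type*} [Fintype A] [Fintype B] [Fintype C] (p : PMF A) (g : A → C)
    (k : C → PMF B) (d : C → B → ℝ) :
    expDist p (fun a => k (g a)) (fun a => d (g a)) = expDist (p.map g) k d := by
  simp only [expDist, jointP, ENNReal.toReal_mul, mul_assoc, ← Finset.mul_sum]
  exact (sum_map_mul p g fun c => ∑ b, (k c b).toReal * d c b).symm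

/-- Mutual information as an average of the divergences of `k a` from the output marginal. -/
lemma mutualInfo_eq_sum_mul {A B : Type*} [Fintype A] [Fintype B] (p : PMF A) (k : A → PMF B) :
    mutualInfo p k =
      ∑ a, (p a).toReal * ∑ b, (k a b).toReal * Real.log ((k a b).toReal / margSnd p k b) := by
  refine Finset.sum_congr rfl fun a _ => ?_
  rw [Finset.mul_sum]
  refine Finset.sum_congr rfl fun b _ => ?_
  rw [jointP, ENNReal.toReal_mul, mul_assoc]
  rcases eq_or_ne (p a).toReal 0 with ha | ha
  · simp [ha]
  · rw [mul_div_mul_left _ _ ha]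

lemma mutualInfo_comp {A B C : Type*} [Fintype A] [Fintype B] [Fintype C] (p : PMF A)
    (g : A → C) (k : C → PMF B) :
    mutualInfo p (fun a => k (g a)) = mutualInfo (p.map g) k := by
  simp only [mutualInfo_eq_sum_mul, margSnd_comp]
  exact (sum_map_mul p g fun c =>
    ∑ b, (k c b).toReal * Real.log ((k c b).toReal / margSnd (p.map g) k b)).symm

open Classical in
/-- Conditioning the input of a channel on a function of it gives a channel from the values of
that function, whose joint distribution is obtained by summing over fibers. -/
lemma exists_channel_jointP_map {A B C : Type*} [Fintype A] [Fintype B] [Fintype C] (p : PMF A)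
    (g : A → C) (k : A → PMF B) :
    ∃ k' : C → PMF B, ∀ c b,
      jointP (p.map g) k' c b = ∑ a with g a = c, jointP p k a b := by
  have hchannel (c : C) : ∃ q : PMF B, ∀ b,
      (p.map g c * q b).toReal = ∑ a with g a = c, jointP p k a b := by
    by_cases hc : ∃ a ∈ {a | g a = c}, a ∈ p.support
    · refine ⟨(p.filter _ hc).bind k, fun b => ?_⟩
      have hmass : p.map g c = ∑' a, Set.indicator {a | g a = c} p a := by
        rw [PMF.map_apply]
        exact tsum_congr fun a => by simp [Set.indicator_apply, eq_comm]
      have hmass_ne_zero : p.map g c ≠ 0 := by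
        obtain ⟨a, hac, ha⟩ := hc
        exact (PMF.mem_support_iff _ _).1 ((PMF.mem_support_map_iff _ _ _).2 ⟨a, ha, hac⟩)
      rw [PMF.bind_apply, tsum_fintype, Finset.mul_sum, Finset.sum_filter,
        ENNReal.toReal_sum fun a _ => ENNReal.mul_ne_top (PMF.apply_ne_top _ _)
          (ENNReal.mul_ne_top (PMF.apply_ne_top _ _) (PMF.apply_ne_top _ _))]
      refine Finset.sum_congr rfl fun a _ => ?_
      rw [PMF.filter_apply, ← hmass, ← mul_assoc, mul_left_comm,
        ENNReal.mul_inv_cancel hmass_ne_zero (PMF.apply_ne_top _ _), mul_one,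
        Set.indicator_apply]
      by_cases ha : g a = c <;> simp [ha, jointP]
    · have hp (a : A) (ha : g a = c) : p a = 0 := by
        by_contra hpa
        exact hc ⟨a, ha, (PMF.mem_support_iff _ _).2 hpa⟩
      refine ⟨k p.support_nonempty.some, fun b => ?_⟩
      have hsum : (p.map g c).toReal = 0 := by
        rw [toReal_map_apply]
        exact Finset.sum_eq_zero fun a ha => by simp [hp a (Finset.mem_filter.1 ha).2]
      rw [ENNReal.toReal_mul, hsum, zero_mul]
      exact (Finset.sum_eq_zero fun a ha => by
        simp [jointP, hp a (Finset.mem_filter.1 ha).2]).symm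
  choose k' hk' using hchannel
  exact ⟨k', hk'⟩

/-- The log-sum inequality. -/
lemma sum_mul_log_div_sum_le {ι : Type*} (s : Finset ι) (u v : ι → ℝ)
    (hu : ∀ i ∈ s, 0 ≤ u i) (hv : ∀ i ∈ s, 0 ≤ v i) (huv : ∀ i ∈ s, v i = 0 → u i = 0) :
    (∑ i ∈ s, u i) * Real.log ((∑ i ∈ s, u i) / ∑ i ∈ s, v i) ≤
      ∑ i ∈ s, u i * Real.log (u i / v i) := by
  set U := ∑ i ∈ s, u i with hU
  set V := ∑ i ∈ s, v i with hV
  rcases (Finset.sum_nonneg hu).eq_or_lt with hU0 | hUpos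
  · have hzero : ∀ i ∈ s, u i = 0 := (Finset.sum_eq_zero_iff_of_nonneg hu).1 hU0.symm
    rw [hU, ← hU0, zero_mul]
    exact (Finset.sum_eq_zero fun i hi => by rw [hzero i hi, zero_mul]).ge
  have hVpos : 0 < V := by
    refine (Finset.sum_nonneg hv).lt_of_ne fun hV0 => hUpos.ne' ?_
    exact Finset.sum_eq_zero fun i hi =>
      huv i hi ((Finset.sum_eq_zero_iff_of_nonneg hv).1 hV0.symm i hi)
  have hc : 0 < U / V := div_pos hUpos hVpos
  have hterm : ∀ i ∈ s,
      u i * Real.log (U / V) + (u i - v i * (U / V)) ≤ u i * Real.log (u i / v i) := by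
    intro i hi
    rcases (hu i hi).eq_or_lt with hui | hui
    · rw [← hui]
      have := mul_nonneg (hv i hi) hc.le
      linarith
    · have hvi : 0 < v i :=
        (hv i hi).lt_of_ne fun h0 => hui.ne' (huv i hi h0.symm)
      have hlog := Real.log_le_sub_one_of_pos (div_pos (mul_pos hvi hc) hui)
      rw [Real.log_div (mul_pos hvi hc).ne' hui.ne', Real.log_mul hvi.ne' hc.ne'] at hlog
      rw [Real.log_div hui.ne' hvi.ne']
      have hmul := mul_le_mul_of_nonneg_left hlog hui.le
      have hcancel : u i * (v i * (U / V) / u i - 1) = v i * (U / V) - u i := by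
        field_simp
      linarith
  calc U * Real.log (U / V)
      = ∑ i ∈ s, (u i * Real.log (U / V) + (u i - v i * (U / V))) := by
        rw [Finset.sum_add_distrib, Finset.sum_sub_distrib, ← Finset.sum_mul, ← Finset.sum_mul,
          ← hU, ← hV, mul_div_cancel₀ _ hVpos.ne', sub_self, add_zero]
    _ ≤ _ := Finset.sum_le_sum hterm

lemma jointP_nonneg {A B : Type*} [Fintype A] [Fintype B] (p : PMF A) (k : A → PMF B) (a : A)
    (b : B) : 0 ≤ jointP p k a b :=
  ENNReal.toReal_nonneg

/-- Every channel from `A` can be replaced by a channel from the values of `g : A → C` without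
changing the expected value of a distortion depending on `A` only through `g`, and without
increasing the mutual information. -/
lemma exists_channel_map_le {A B C : Type*} [Fintype A] [Fintype B] [Fintype C] (p : PMF A)
    (g : A → C) (k : A → PMF B) (d : C → B → ℝ) :
    ∃ k' : C → PMF B, expDist (p.map g) k' d = expDist p k (fun a => d (g a)) ∧
      mutualInfo (p.map g) k' ≤ mutualInfo p k := by
  classical
  obtain ⟨k', hk'⟩ := exists_channel_jointP_map p g k
  have hmarg (b : B) : margSnd (p.map g) k' b = margSnd p k b := by
    simp only [margSnd, hk']
    exact Finset.sum_fiberwise Finset.univ g fun a => jointP p k a b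
  refine ⟨k', ?_, ?_⟩
  · simp only [expDist]
    rw [← Finset.sum_fiberwise Finset.univ g]
    refine Finset.sum_congr rfl fun c _ => ?_
    rw [Finset.sum_comm]
    refine Finset.sum_congr rfl fun b _ => ?_
    rw [hk', Finset.sum_mul]
    exact Finset.sum_congr rfl fun a ha => by rw [(Finset.mem_filter.1 ha).2]
  · simp only [mutualInfo]
    rw [← Finset.sum_fiberwise Finset.univ g
      fun a => ∑ b, jointP p k a b * Real.log (jointP p k a b / ((p a).toReal * margSnd p k b))]
    refine Finset.sum_le_sum fun c _ => ?_
    rw [Finset.sum_comm]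
    refine Finset.sum_le_sum fun b _ => ?_
    rw [hk', hmarg, toReal_map_apply, Finset.sum_mul _ _ (margSnd p k b)]
    refine sum_mul_log_div_sum_le _ _ _ (fun a _ => jointP_nonneg p k a b)
      (fun a _ => mul_nonneg ENNReal.toReal_nonneg
        (Finset.sum_nonneg fun a' _ => jointP_nonneg p k a' b)) fun a _ hzero => ?_
    rcases mul_eq_zero.1 hzero with hp | hm
    · rw [jointP, ENNReal.toReal_mul, hp, zero_mul]
    · exact (Finset.sum_eq_zero_iff_of_nonneg fun a' _ => jointP_nonneg p k a' b).1 hm a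
        (Finset.mem_univ a)

/-- A set of reals and a subset of it that is coinitial in it have the same infimum. -/
lemma sInf_eq_of_subset_of_forall_exists_le {S T : Set ℝ} (hTS : T ⊆ S)
    (hST : ∀ s ∈ S, ∃ t ∈ T, t ≤ s) : sInf S = sInf T := by
  have hlower : lowerBounds S = lowerBounds T :=
    (lowerBounds_mono_set hTS).antisymm fun m hm s hs =>
      let ⟨_, ht, hts⟩ := hST s hs
      (hm ht).trans hts
  rcases S.eq_empty_or_nonempty with rfl | hS
  · rw [Set.subset_empty_iff.1 hTS]
  have hT : T.Nonempty :=
    let ⟨s, hs⟩ := hS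
    let ⟨t, ht, _⟩ := hST s hs
    ⟨t, ht⟩
  by_cases hbdd : BddBelow S
  · have hglb := isGLB_csInf hS hbdd
    rw [IsGLB, hlower] at hglb
    exact (IsGLB.csInf_eq hglb hT).symm
  · have hbdd' : ¬ BddBelow T := by rwa [BddBelow, ← hlower]
    rw [Real.sInf_of_not_bddBelow hbdd, Real.sInf_of_not_bddBelow hbdd']

/-- For every D > 0, the minimal achievable rate of direct coding for machines
equals that of model splitting: R_XY(D;T) = R_Y(D;T). Here f = h ∘ g. -/
theorem direct_eq_modelSplitting
    {𝒳 𝒴 𝒯 : Type*} [Fintype 𝒳] [Fintype 𝒴] [Fintype 𝒯]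
    [Nonempty 𝒳] [Nonempty 𝒴] [Nonempty 𝒯]
    (pX : PMF 𝒳) (g : 𝒳 → 𝒴) (h : 𝒴 → 𝒯)
    (dT : 𝒯 → 𝒯 → ℝ) (hdT : ∀ t t', 0 ≤ dT t t')
    (D : ℝ) (hD : 0 < D) :
    rate pX (fun x yhat => dT (h (g x)) (h yhat)) D
      = rate (pX.map g) (fun y yhat => dT (h y) (h yhat)) D := by
  refine sInf_eq_of_subset_of_forall_exists_le ?_ ?_
  · rintro _ ⟨k, hk, rfl⟩
    refine ⟨fun x => k (g x), ?_, (mutualInfo_comp pX g k).symm⟩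
    rwa [expDist_comp pX g k fun y yhat => dT (h y) (h yhat)]
  · rintro _ ⟨k, hk, rfl⟩
    obtain ⟨k', hdist, hinfo⟩ :=
      exists_channel_map_le pX g k fun y yhat => dT (h y) (h yhat)
    exact ⟨_, ⟨k', hdist.trans_le hk, rfl⟩, hinfo⟩
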